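/- Suppose there is a constant C > 0 such that for all n, w ≥ 1 and all ε with 0 < ε < 1, there exists a deterministic nonadaptive ε-sampler (Q, g) for permutation branching programs of length n and width w with query complexity |Q| ≤ (n·w/ε)^C. Then there exists a constant C' > 0 (depending only on C) such that for all n, a ≥ 1 and all ε with 0 < ε < 1, there exists a deterministic nonadaptive ε-sampler (Q', g') for the class of permutation branching programs of length n, arbitrary width, with at most a accept states, with query complexity |Q'| ≤ (n·a/ε)^{C'}. -/

import Mathlib

/-- An ordered branching program of length `n` and width `w`: a start state,
a transition function for each layer, and a set of accept states. -/
structure OBP (n w : ℕ) where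
  start : Fin w
  trans : ℕ → Fin w → Bool → Fin w
  accept : Finset (Fin w)

namespace OBP

variable {n w : ℕ}

/-- The state reached from state `v` in layer `i` by walking along the bits of `z`. -/
def walk (B : OBP n w) : ℕ → Fin w → List Bool → Fin w
  | _, v, [] => v
  | i, v, b :: z => B.walk (i + 1) (B.trans i v b) z

/-- `B.eval x = true` iff the walk from the start state along `x` ends at an accept state. -/
def eval (B : OBP n w) (x : Fin n → Bool) : Bool :=
  decide (B.walk 0 B.start (List.ofFn x) ∈ B.accept)

/-- The probability that `B` accepts a uniformly random input. -/
noncomputable def acceptProb (B : OBP n w) : ℝ :=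
  ((Finset.univ.filter fun x : Fin n → Bool => B.eval x = true).card : ℝ) / 2 ^ n

/-- `B` is a permutation branching program: each layer's transitions are permutations. -/
def IsPerm (B : OBP n w) : Prop :=
  ∀ i < n, ∀ b, Function.Bijective fun v => B.trans i v b

/-- The hit set at layer `i` induced by `H`: the states of layer `i` from which the walk
along the last `n - i` bits of some `y ∈ H` reaches an accept state. -/
def hitSet (B : OBP n w) (H : Finset (Fin n → Bool)) (i : ℕ) : Finset (Fin w) :=
  Finset.univ.filter fun v => ∃ y ∈ H, B.walk i v ((List.ofFn y).drop i) ∈ B.accept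

/-- The induced hit function `B_H`: accept iff the walk from the start state stays within
the hit sets at every layer. -/
def hitFun (B : OBP n w) (H : Finset (Fin n → Bool)) (x : Fin n → Bool) : Bool :=
  decide (∀ i ≤ n, B.walk 0 B.start ((List.ofFn x).take i) ∈ B.hitSet H i)

end OBP

/-- The fraction of inputs on which `f` outputs `true`. -/
noncomputable def acceptFrac {n : ℕ} (f : (Fin n → Bool) → Bool) : ℝ :=
  ((Finset.univ.filter fun x : Fin n → Bool => f x = true).card : ℝ) / 2 ^ n

/-- `(Q, g)` is a deterministic nonadaptive `ε`-sampler for the class `F`: the output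
`g f` depends only on the restriction of `f` to `Q`, and estimates the acceptance
probability of every `f ∈ F` to within `ε`. -/
def IsSampler {n : ℕ} (F : Set ((Fin n → Bool) → Bool)) (Q : Finset (Fin n → Bool))
    (g : ((Fin n → Bool) → Bool) → ℝ) (ε : ℝ) : Prop :=
  (∀ f f' : (Fin n → Bool) → Bool, (∀ x ∈ Q, f x = f' x) → g f = g f') ∧
    ∀ f ∈ F, |g f - acceptFrac f| ≤ ε

/-- `H` is a deterministic `ε`-hitter for the class `F`. -/
def IsHitter {n : ℕ} (F : Set ((Fin n → Bool) → Bool)) (H : Finset (Fin n → Bool))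
    (ε : ℝ) : Prop :=
  ∀ f ∈ F, acceptFrac f > ε → ∃ x ∈ H, f x = true

/-- Functions computed by permutation branching programs of length `n` and width `w`. -/
def permClassW (n w : ℕ) : Set ((Fin n → Bool) → Bool) :=
  { f | ∃ B : OBP n w, B.IsPerm ∧ f = B.eval }

/-- Functions computed by permutation branching programs of length `n`, arbitrary width,
with a single accept state. -/
def permClassSingle (n : ℕ) : Set ((Fin n → Bool) → Bool) :=
  { f | ∃ w, ∃ B : OBP n w, B.IsPerm ∧ B.accept.card = 1 ∧ f = B.eval }

/-- Functions computed by permutation branching programs of length `n`, arbitrary width,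
with at most `a` accept states. -/
def permClassA (n a : ℕ) : Set ((Fin n → Bool) → Bool) :=
  { f | ∃ w, ∃ B : OBP n w, B.IsPerm ∧ B.accept.card ≤ a ∧ f = B.eval }

/-- Functions computed by ordered branching programs of length `n` and width `w`. -/
def obpClassW (n w : ℕ) : Set ((Fin n → Bool) → Bool) :=
  { f | ∃ B : OBP n w, f = B.eval }

/-!
Suppose that from every state outside the sets `S i` the program accepts with probability at most
`δ`. Requiring the walk to stay within the sets `S i` then loses at most `δ` of the acceptance
probability, because this is all that is left at the moment the walk first leaves them. If moreover
each `S i` has at most `M` elements, the restricted function is computed by a permutation program of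
width `(n + 1) * M`: a walk which leaves the sets freezes, remembering the layer in which it did so,
and an injective partial transition extends to a permutation.

In a permutation program the acceptance probabilities of the states of one layer sum to the number
of accept states, so at most `a / δ` states have acceptance probability above `δ`. With these states
as `S i`, the query set of a bounded-width sampler is a hitter `H` for unbounded width. With the
sets of states from which some suffix of an element of `H` is accepted as `S i`, the restricted
function is simulated by black-box queries, and a second bounded-width sampler estimates it.
-/

section AcceptFrac

variable {n : ℕ}

theorem acceptFrac_nonneg (f : (Fin n → Bool) → Bool) : 0 ≤ acceptFrac f := by
  unfold acceptFrac
  positivity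

theorem acceptFrac_le_one (f : (Fin n → Bool) → Bool) : acceptFrac f ≤ 1 := by
  unfold acceptFrac
  rw [div_le_one (by positivity)]
  exact_mod_cast (Finset.card_le_univ _).trans (by simp)

theorem acceptFrac_mono : Monotone (acceptFrac (n := n)) := by
  intro f f' h
  have hsub := Finset.card_le_card <|
    Finset.monotone_filter_right Finset.univ fun x _ => Bool.le_iff_imp.1 (h x)
  unfold acceptFrac
  gcongr

theorem acceptFrac_true : acceptFrac (fun _ : Fin n → Bool => true) = 1 := by
  simp [acceptFrac]

theorem acceptFrac_false : acceptFrac (fun _ : Fin n → Bool => false) = 0 := by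
  simp [acceptFrac]

theorem acceptFrac_succ (f : (Fin (n + 1) → Bool) → Bool) :
    acceptFrac f = (acceptFrac (fun x => f (Fin.cons false x)) +
      acceptFrac fun x => f (Fin.cons true x)) / 2 := by
  have hsum : ∑ x, (if f x then (1 : ℝ) else 0) =
      ∑ x, (if f (Fin.cons true x) then 1 else 0) +
        ∑ x, (if f (Fin.cons false x) then 1 else 0) := by
    rw [← (Fin.consEquiv fun _ => Bool).sum_comp, Fintype.sum_prod_type, Fintype.sum_bool]
    rfl
  simp only [acceptFrac, Finset.natCast_card_filter, hsum, pow_succ]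
  ring

theorem acceptFrac_comp_drop (i k : ℕ) (P : List Bool → Bool) :
    acceptFrac (fun x : Fin (k + i) → Bool => P ((List.ofFn x).drop i)) =
      acceptFrac fun x : Fin k → Bool => P (List.ofFn x) := by
  induction i with
  | zero => rfl
  | succ i ih =>
    rw [← add_assoc, acceptFrac_succ]
    simp only [List.ofFn_cons, List.drop_succ_cons, ih, add_self_div_two]

end AcceptFrac

section SamplersAndHitters

variable {n : ℕ} {F G : Set ((Fin n → Bool) → Bool)} {H Q : Finset (Fin n → Bool)}
  {g : ((Fin n → Bool) → Bool) → ℝ} {δ η ε : ℝ}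

theorem isSampler_const_half (F : Set ((Fin n → Bool) → Bool)) (hε : 1 / 2 ≤ ε) :
    IsSampler F ∅ (fun _ => 1 / 2) ε :=
  ⟨fun _ _ _ => rfl, fun f _ =>
    abs_le.2 ⟨by linarith [acceptFrac_le_one f], by linarith [acceptFrac_nonneg f]⟩⟩

theorem IsSampler.isHitter (hQ : IsSampler F Q g ε) (hF : (fun _ => false) ∈ F) :
    IsHitter F Q (2 * ε) := by
  intro f hf hacc
  by_contra! hmiss
  have hg : g f = g fun _ => false := hQ.1 _ _ fun x hx => by simpa using hmiss x hx
  have hf_est := abs_le.1 (hQ.2 f hf)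
  have hfalse_est := abs_le.1 (hQ.2 _ hF)
  rw [acceptFrac_false] at hfalse_est
  linarith [hf_est.1, hfalse_est.2]

theorem IsHitter.of_exists_le (hG : IsHitter G H δ)
    (hF : ∀ f ∈ F, ∃ f' ∈ G, f' ≤ f ∧ acceptFrac f ≤ η + acceptFrac f') :
    IsHitter F H (δ + η) := by
  intro f hf hacc
  obtain ⟨f', hf', hle, hfrac⟩ := hF f hf
  obtain ⟨x, hx, hxf'⟩ := hG f' hf' (by linarith)
  exact ⟨x, hx, Bool.le_iff_imp.1 (hle x) hxf'⟩

end SamplersAndHitters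

namespace OBP

variable {n w : ℕ}

theorem walk_append (B : OBP n w) (i : ℕ) (v : Fin w) (z z' : List Bool) :
    B.walk i v (z ++ z') = B.walk (i + z.length) (B.walk i v z) z' := by
  induction z generalizing i v with
  | nil => rfl
  | cons b z ih => rw [List.cons_append, walk, ih, List.length_cons, Nat.add_right_comm]; rfl

theorem IsPerm.walk_injective {B : OBP n w} (hB : B.IsPerm) {i : ℕ} {z : List Bool}
    (h : i + z.length ≤ n) : Function.Injective fun v => B.walk i v z := by
  induction z generalizing i with
  | nil => exact Function.injective_id
  | cons b z ih =>
    rw [List.length_cons] at h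
    exact (ih (i := i + 1) (by omega)).comp (hB i (by omega) b).injective

section AcceptanceProbabilities

/-- The probability that the walk from state `v` in layer `i` along `k` uniformly random bits ends
at an accept state. Having `k` as a parameter instead of `n - i` makes induction on it possible. -/
noncomputable def acceptProbFrom (B : OBP n w) (i k : ℕ) (v : Fin w) : ℝ :=
  acceptFrac fun z : Fin k → Bool => decide (B.walk i v (List.ofFn z) ∈ B.accept)

theorem acceptProbFrom_zero (B : OBP n w) (i : ℕ) (v : Fin w) :
    B.acceptProbFrom i 0 v = if v ∈ B.accept then 1 else 0 := by
  by_cases h : v ∈ B.accept <;>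
    simp [acceptProbFrom, walk, h, acceptFrac_true, acceptFrac_false]

theorem acceptProbFrom_succ (B : OBP n w) (i k : ℕ) (v : Fin w) :
    B.acceptProbFrom i (k + 1) v = (B.acceptProbFrom (i + 1) k (B.trans i v false) +
      B.acceptProbFrom (i + 1) k (B.trans i v true)) / 2 := by
  simp only [acceptProbFrom, acceptFrac_succ (n := k), List.ofFn_cons, walk]

theorem IsPerm.sum_acceptProbFrom {B : OBP n w} (hB : B.IsPerm) {i k : ℕ} (h : i + k ≤ n) :
    ∑ v, B.acceptProbFrom i k v = B.accept.card := by
  induction k generalizing i with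
  | zero => simp only [acceptProbFrom_zero, Finset.sum_boole, Finset.filter_univ_mem]
  | succ k ih =>
    have hb (b : Bool) : ∑ v, B.acceptProbFrom (i + 1) k (B.trans i v b) = B.accept.card := by
      rw [(hB i (by omega) b).sum_comp (B.acceptProbFrom (i + 1) k), ih (by omega)]
    simp only [acceptProbFrom_succ, ← Finset.sum_div, Finset.sum_add_distrib, hb,
      add_self_div_two]

/-- The program that idles in state `v` up to layer `i` and follows `B` afterwards; it turns
acceptance from an inner layer into acceptance by a program of full length. -/
def restart (B : OBP n w) (i : ℕ) (v : Fin w) : OBP n w where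
  start := v
  trans j u b := if j < i then u else B.trans j u b
  accept := B.accept

theorem IsPerm.restart {B : OBP n w} (hB : B.IsPerm) (i : ℕ) (v : Fin w) :
    (B.restart i v).IsPerm := by
  intro j hj b
  by_cases h : j < i
  · simp only [OBP.restart, h, if_true]
    exact Function.bijective_id
  · simpa only [OBP.restart, h, if_false] using hB j hj b

theorem walk_restart_of_le (B : OBP n w) {i j : ℕ} (h : i ≤ j) (v u : Fin w) (z : List Bool) :
    (B.restart i v).walk j u z = B.walk j u z := by
  induction z generalizing j u with
  | nil => rfl
  | cons b z ih =>
    rw [walk, walk, ih (by omega)]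
    simp only [restart, h.not_gt, if_false]

theorem walk_restart (B : OBP n w) {i j : ℕ} (h : j ≤ i) (v u : Fin w) (z : List Bool) :
    (B.restart i v).walk j u z = B.walk i u (z.drop (i - j)) := by
  induction z generalizing j with
  | nil => simp [walk]
  | cons b z ih =>
    rcases h.eq_or_lt with rfl | h
    · simp [walk_restart_of_le]
    · rw [walk, show i - j = (i - (j + 1)) + 1 by omega, List.drop_succ_cons, ← ih h]
      simp only [restart, h, if_true]

theorem eval_restart (B : OBP n w) (i : ℕ) (v : Fin w) (x : Fin n → Bool) :
    (B.restart i v).eval x = decide (B.walk i v ((List.ofFn x).drop i) ∈ B.accept) := by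
  rw [eval, walk_restart _ i.zero_le]
  rfl

theorem acceptFrac_eval_restart (B : OBP n w) {i k : ℕ} (h : i + k = n) (v : Fin w) :
    acceptFrac (B.restart i v).eval = B.acceptProbFrom i k v := by
  obtain rfl : n = k + i := by omega
  rw [funext (B.eval_restart i v)]
  exact acceptFrac_comp_drop i k fun z => decide (B.walk i v z ∈ B.accept)

end AcceptanceProbabilities

section Staying

/-- Every state visited by the walk along `z` from state `v` in layer `i`, both ends included, lies
in the set which `S` assigns to its layer. -/
def Stays (B : OBP n w) (S : ℕ → Finset (Fin w)) (i : ℕ) (v : Fin w) (z : List Bool) : Prop :=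
  ∀ j ≤ z.length, B.walk i v (z.take j) ∈ S (i + j)

instance (B : OBP n w) (S : ℕ → Finset (Fin w)) (i : ℕ) (v : Fin w) (z : List Bool) :
    Decidable (B.Stays S i v z) :=
  inferInstanceAs (Decidable (∀ j ≤ z.length, B.walk i v (z.take j) ∈ S (i + j)))

theorem stays_nil (B : OBP n w) (S : ℕ → Finset (Fin w)) (i : ℕ) (v : Fin w) :
    B.Stays S i v [] ↔ v ∈ S i := by
  simp [Stays, walk]

theorem stays_cons (B : OBP n w) (S : ℕ → Finset (Fin w)) (i : ℕ) (v : Fin w) (b : Bool)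
    (z : List Bool) :
    B.Stays S i v (b :: z) ↔ v ∈ S i ∧ B.Stays S (i + 1) (B.trans i v b) z := by
  have hsplit (p : ℕ → Prop) :
      (∀ j ≤ z.length + 1, p j) ↔ p 0 ∧ ∀ j ≤ z.length, p (j + 1) := by
    simpa only [Nat.lt_succ_iff] using Nat.forall_lt_succ_left (n := z.length + 1) (p := p)
  rw [Stays, List.length_cons, hsplit]
  simp only [Stays, walk, List.take_zero, List.take_succ_cons, add_zero, add_assoc, add_comm 1]

theorem Stays.mem {B : OBP n w} {S : ℕ → Finset (Fin w)} {i : ℕ} {v : Fin w} {z : List Bool}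
    (h : B.Stays S i v z) : v ∈ S i := by
  simpa [walk] using h 0 z.length.zero_le

/-- The function accepting the inputs along which the walk from the start state stays within `S`.
For the hit sets of `H` this is the induced hit function. -/
def stayFun (B : OBP n w) (S : ℕ → Finset (Fin w)) (x : Fin n → Bool) : Bool :=
  decide (B.Stays S 0 B.start (List.ofFn x))

theorem hitFun_eq_stayFun (B : OBP n w) (H : Finset (Fin n → Bool)) :
    B.hitFun H = B.stayFun (B.hitSet H) := by
  funext x
  simp [hitFun, stayFun, Stays]

theorem stayFun_le_eval {B : OBP n w} {S : ℕ → Finset (Fin w)} (hS : S n ⊆ B.accept) :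
    B.stayFun S ≤ B.eval := by
  refine fun x => Bool.le_iff_imp.2 fun hx => decide_eq_true (hS ?_)
  simpa [List.take_of_length_le] using of_decide_eq_true hx n (by simp)

theorem acceptProbFrom_le_add (B : OBP n w) {S : ℕ → Finset (Fin w)} {δ : ℝ} (hδ : 0 ≤ δ)
    (hS : ∀ i k, i + k = n → ∀ v ∉ S i, B.acceptProbFrom i k v ≤ δ) {i k : ℕ} (hik : i + k = n)
    (v : Fin w) :
    B.acceptProbFrom i k v ≤
      δ + acceptFrac fun z : Fin k → Bool => decide (B.Stays S i v (List.ofFn z)) := by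
  induction k generalizing i v with
  | zero =>
    by_cases hv : v ∈ S i
    · simp only [List.ofFn_zero, stays_nil, hv, decide_true, acceptFrac_true]
      exact (acceptFrac_le_one _).trans (le_add_of_nonneg_left hδ)
    · exact (hS i 0 hik v hv).trans (le_add_of_nonneg_right (acceptFrac_nonneg _))
  | succ k ih =>
    by_cases hv : v ∈ S i
    · simp only [acceptProbFrom_succ, acceptFrac_succ (n := k), List.ofFn_cons, stays_cons, hv,
        true_and]
      linarith [ih (i := i + 1) (by omega) (B.trans i v false),
        ih (i := i + 1) (by omega) (B.trans i v true)]
    · exact (hS i (k + 1) hik v hv).trans (le_add_of_nonneg_right (acceptFrac_nonneg _))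

theorem acceptFrac_eval_le_add (B : OBP n w) {S : ℕ → Finset (Fin w)} {δ : ℝ} (hδ : 0 ≤ δ)
    (hS : ∀ i k, i + k = n → ∀ v ∉ S i, B.acceptProbFrom i k v ≤ δ) :
    acceptFrac B.eval ≤ δ + acceptFrac (B.stayFun S) :=
  B.acceptProbFrom_le_add hδ hS n.zero_add B.start

end Staying

section WidthReduction

theorem false_mem_permClassW (n : ℕ) (hw : 0 < w) :
    (fun _ => false) ∈ permClassW n w :=
  ⟨{ start := ⟨0, hw⟩, trans := fun _ v _ => v, accept := ∅ },
    fun _ _ _ => Function.bijective_id, by funext x; simp [eval]⟩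

theorem exists_injOn_fin_of_card_le {α : Type*} {s : Finset α} {W : ℕ} [NeZero W]
    (h : s.card ≤ W) : ∃ c : α → Fin W, Set.InjOn c s := by
  obtain ⟨c, -, hc⟩ := s.finite_toSet.exists_injOn_of_encard_le (t := (Set.univ : Set (Fin W)))
    (by simpa [Set.encard_coe_eq_coe_finsetCard] using h)
  exact ⟨c, hc⟩

section Reachable

variable {B : OBP n w} {R : ℕ → Finset (Fin w)}

theorem walk_mem_of_mapsTo
    (hmaps : ∀ i < n, ∀ b, Set.MapsTo (fun v => B.trans i v b) (R i) (R (i + 1))) {i : ℕ}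
    {v : Fin w} (hv : v ∈ R i) {z : List Bool} (hz : i + z.length ≤ n) :
    B.walk i v z ∈ R (i + z.length) := by
  induction z generalizing i v with
  | nil => exact hv
  | cons b z ih =>
    rw [List.length_cons] at hz ⊢
    rw [walk, show i + (z.length + 1) = i + 1 + z.length by omega]
    exact ih (hmaps i (by omega) b hv) (by omega)

theorem walk_comp_of_semiconj {W : ℕ} {B' : OBP n W} {c : ℕ → Fin w → Fin W}
    (hmaps : ∀ i < n, ∀ b, Set.MapsTo (fun v => B.trans i v b) (R i) (R (i + 1)))
    (hc : ∀ i < n, ∀ b, ∀ v ∈ R i, B'.trans i (c i v) b = c (i + 1) (B.trans i v b)) {i : ℕ}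
    {v : Fin w} (hv : v ∈ R i) {z : List Bool} (hz : i + z.length ≤ n) :
    B'.walk i (c i v) z = c (i + z.length) (B.walk i v z) := by
  induction z generalizing i v with
  | nil => rfl
  | cons b z ih =>
    rw [List.length_cons] at hz ⊢
    rw [walk, hc i (by omega) b v hv, ih (hmaps i (by omega) b hv) (by omega), walk,
      Nat.add_right_comm, add_assoc]

theorem eval_mem_permClassW_of_injOn {W : ℕ} (hcard : ∀ i ≤ n, (R i).card ≤ W)
    (hstart : B.start ∈ R 0)
    (hmaps : ∀ i < n, ∀ b, Set.MapsTo (fun v => B.trans i v b) (R i) (R (i + 1)))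
    (hinj : ∀ i < n, ∀ b, Set.InjOn (fun v => B.trans i v b) (R i)) :
    B.eval ∈ permClassW n W := by
  have : NeZero W := ⟨((Finset.card_pos.2 ⟨_, hstart⟩).trans_le (hcard 0 n.zero_le)).ne'⟩
  have hcode (i : ℕ) (hi : i ≤ n) : ∃ c : Fin w → Fin W, Set.InjOn c (R i) :=
    exists_injOn_fin_of_card_le (hcard i hi)
  choose! c hc using hcode
  have hperm (i : ℕ) (hi : i < n) (b : Bool) :
      ∃ σ : Equiv.Perm (Fin W), ∀ v ∈ R i, σ (c i v) = c (i + 1) (B.trans i v b) := by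
    obtain ⟨σ, hσ⟩ := Equiv.Perm.exists_extending_pair _ _ (hc i hi.le).injective
      ((hc (i + 1) hi).comp (hinj i hi b) (hmaps i hi b)).injective
    exact ⟨σ, fun v hv => hσ ⟨v, hv⟩⟩
  choose! σ hσ using hperm
  let B' : OBP n W :=
    { start := c 0 B.start
      trans := fun i k b => σ i b k
      accept := (B.accept ∩ R n).image (c n) }
  refine ⟨B', fun i _ b => (σ i b).bijective, ?_⟩
  funext x
  have hmem : B.walk 0 B.start (List.ofFn x) ∈ R n := by
    simpa using walk_mem_of_mapsTo hmaps hstart (z := List.ofFn x) (by simp)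
  have hwalk : B'.walk 0 (c 0 B.start) (List.ofFn x) =
      c n (B.walk 0 B.start (List.ofFn x)) := by
    simpa using walk_comp_of_semiconj (B' := B') hmaps hσ hstart (z := List.ofFn x) (by simp)
  rw [eval, eval, decide_eq_decide, hwalk, ← Finset.mem_coe (s := B'.accept), Finset.coe_image,
    (hc n le_rfl).mem_image_iff (by simp) hmem]
  simp [hmem]

end Reachable

/-- The state of a freezing program that records state `v` of layer `j`. The layer is taken modulo
`n + 1`, which is harmless as only `j ≤ n` occurs. -/
def tag (n j : ℕ) (v : Fin w) : Fin ((n + 1) * w) :=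
  finProdFinEquiv (Fin.ofNat (n + 1) j, v)

theorem tag_inj {j k : ℕ} (hj : j ≤ n) (hk : k ≤ n) {u v : Fin w} :
    tag n j u = tag n k v ↔ j = k ∧ u = v := by
  simp [tag, Fin.ext_iff, Nat.mod_eq_of_lt (Nat.lt_succ_of_le hj),
    Nat.mod_eq_of_lt (Nat.lt_succ_of_le hk)]

/-- The program that follows `B` as long as the walk stays within `S` and then freezes. In layer `i`
the state `tag n i v` stands for a walk at `v` that has not left `S`, while for `j < i` the state
`tag n j v` stands for a walk that left `S` when moving on from state `v` of layer `j`. Keeping `j`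
makes transitions injective. -/
def freeze (B : OBP n w) (S : ℕ → Finset (Fin w)) : OBP n ((n + 1) * w) where
  start := tag n 0 B.start
  trans i p b :=
    let q := finProdFinEquiv.symm p
    if q.1 = i ∧ B.trans i q.2 b ∈ S (i + 1) then tag n (i + 1) (B.trans i q.2 b) else p
  accept := Finset.univ.image (tag n n)

/-- The states of `B.freeze S` that record a state `v ∈ S j` with `j ≤ i`. They include all those
reached in layer `i` by walks that start in `S 0`. -/
def frozenLayer (n : ℕ) (S : ℕ → Finset (Fin w)) (i : ℕ) : Finset (Fin ((n + 1) * w)) :=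
  (Finset.range (i + 1)).biUnion fun j => (S j).image (tag n j)

section Freeze

variable (B : OBP n w) {S : ℕ → Finset (Fin w)} {i j : ℕ}

theorem trans_freeze_tag (hj : j ≤ n) (v : Fin w) (b : Bool) :
    (B.freeze S).trans i (tag n j v) b =
      if j = i ∧ B.trans i v b ∈ S (i + 1) then tag n (i + 1) (B.trans i v b) else tag n j v := by
  simp only [freeze, tag, Equiv.symm_apply_apply, Fin.val_ofNat,
    Nat.mod_eq_of_lt (Nat.lt_succ_of_le hj)]

theorem tag_mem_accept_freeze (hj : j ≤ n) {v : Fin w} :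
    tag n j v ∈ (B.freeze S).accept ↔ j = n := by
  simp [freeze, tag_inj le_rfl hj, eq_comm]

theorem walk_freeze_of_lt (hji : j < i) {z : List Bool} (hz : i + z.length ≤ n) (v : Fin w) :
    (B.freeze S).walk i (tag n j v) z = tag n j v := by
  induction z generalizing i with
  | nil => rfl
  | cons b z ih =>
    rw [List.length_cons] at hz
    rw [walk, trans_freeze_tag B (by omega), if_neg (by omega), ih (by omega) (by omega)]

theorem walk_freeze_mem_accept {z : List Bool} (hz : i + z.length = n) {v : Fin w}
    (hv : v ∈ S i) :
    (B.freeze S).walk i (tag n i v) z ∈ (B.freeze S).accept ↔ B.Stays S i v z := by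
  induction z generalizing i v with
  | nil =>
    rw [walk, tag_mem_accept_freeze B (by omega), stays_nil]
    exact iff_of_true hz hv
  | cons b z ih =>
    rw [List.length_cons] at hz
    rw [walk, trans_freeze_tag B (by omega), stays_cons, and_iff_right hv]
    by_cases hb : B.trans i v b ∈ S (i + 1)
    · rw [if_pos ⟨rfl, hb⟩, ih (by omega) hb]
    · rw [if_neg (hb ·.2), walk_freeze_of_lt B i.lt_succ_self (by omega),
        tag_mem_accept_freeze B (by omega)]
      exact iff_of_false (by omega) (hb ·.mem)

theorem eval_freeze (hstart : B.start ∈ S 0) : (B.freeze S).eval = B.stayFun S :=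
  funext fun _ => decide_eq_decide.2 (B.walk_freeze_mem_accept (by simp) hstart)

theorem mem_frozenLayer {p : Fin ((n + 1) * w)} :
    p ∈ frozenLayer n S i ↔ ∃ j ≤ i, ∃ v ∈ S j, tag n j v = p := by
  simp [frozenLayer]

theorem card_frozenLayer_le {M : ℕ} (hS : ∀ j ≤ n, (S j).card ≤ M) (hi : i ≤ n) :
    (frozenLayer n S i).card ≤ (n + 1) * M := by
  calc (frozenLayer n S i).card ≤ (Finset.range (i + 1)).card * M :=
        Finset.card_biUnion_le_card_mul _ _ _ fun j hj =>
          Finset.card_image_le.trans (hS j (by rw [Finset.mem_range] at hj; omega))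
    _ ≤ (n + 1) * M := by rw [Finset.card_range]; gcongr

theorem mapsTo_trans_freeze (hi : i < n) (b : Bool) :
    Set.MapsTo (fun p => (B.freeze S).trans i p b) (frozenLayer n S i)
      (frozenLayer n S (i + 1)) := by
  intro p hp
  obtain ⟨j, hj, v, hv, rfl⟩ := mem_frozenLayer.1 hp
  refine mem_frozenLayer.2 ?_
  simp only [trans_freeze_tag B (hj.trans hi.le)]
  split_ifs with h
  · exact ⟨i + 1, le_rfl, _, h.2, rfl⟩
  · exact ⟨j, by omega, v, hv, rfl⟩

theorem IsPerm.injOn_trans_freeze {B : OBP n w} (hB : B.IsPerm) (hi : i < n) (b : Bool) :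
    Set.InjOn (fun p => (B.freeze S).trans i p b) (frozenLayer n S i) := by
  intro p hp q hq hpq
  obtain ⟨j, hj, v, -, rfl⟩ := mem_frozenLayer.1 hp
  obtain ⟨k, hk, u, -, rfl⟩ := mem_frozenLayer.1 hq
  simp only [trans_freeze_tag B (hj.trans hi.le), trans_freeze_tag B (hk.trans hi.le)] at hpq
  split_ifs at hpq with hv hu hu
  · have hvu : B.trans i v b = B.trans i u b := ((tag_inj hi hi).1 hpq).2
    rw [hv.1, hu.1, (hB i hi b).injective hvu]
  · have := ((tag_inj hi (hk.trans hi.le)).1 hpq).1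
    omega
  · have := ((tag_inj (hj.trans hi.le) hi).1 hpq).1
    omega
  · exact hpq

theorem IsPerm.stayFun_mem_permClassW {B : OBP n w} (hB : B.IsPerm) {M : ℕ} (hM : 0 < M)
    (hS : ∀ i ≤ n, (S i).card ≤ M) : B.stayFun S ∈ permClassW n ((n + 1) * M) := by
  by_cases hstart : B.start ∈ S 0
  · rw [← B.eval_freeze hstart]
    exact eval_mem_permClassW_of_injOn (R := frozenLayer n S)
      (fun i hi => card_frozenLayer_le hS hi) (mem_frozenLayer.2 ⟨0, le_rfl, _, hstart, rfl⟩)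
      (fun i hi b => B.mapsTo_trans_freeze hi b) (fun i hi b => hB.injOn_trans_freeze hi b)
  · have hfalse : B.stayFun S = fun _ => false :=
      funext fun _ => decide_eq_false fun h => hstart h.mem
    rw [hfalse]
    exact false_mem_permClassW n (Nat.mul_pos n.succ_pos hM)

end Freeze

end WidthReduction

section HeavySet

/-- The states of layer `i` from which the program accepts with probability more than `δ`. -/
noncomputable def heavySet (B : OBP n w) (δ : ℝ) (i : ℕ) : Finset (Fin w) :=
  Finset.univ.filter fun v => δ < B.acceptProbFrom i (n - i) v

theorem acceptProbFrom_le_of_notMem_heavySet {B : OBP n w} {δ : ℝ} {i k : ℕ} (hik : i + k = n)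
    {v : Fin w} (hv : v ∉ B.heavySet δ i) : B.acceptProbFrom i k v ≤ δ := by
  obtain rfl : k = n - i := by omega
  simpa [heavySet] using hv

theorem heavySet_last_subset (B : OBP n w) {δ : ℝ} (hδ : 0 ≤ δ) : B.heavySet δ n ⊆ B.accept := by
  intro v hv
  by_contra hacc
  have hpos := (Finset.mem_filter.1 hv).2
  rw [Nat.sub_self, acceptProbFrom_zero, if_neg hacc] at hpos
  exact hpos.not_ge hδ

theorem IsPerm.card_heavySet_mul_le {B : OBP n w} (hB : B.IsPerm) (δ : ℝ) {i : ℕ} (hi : i ≤ n) :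
    (B.heavySet δ i).card * δ ≤ B.accept.card := by
  calc (B.heavySet δ i).card * δ ≤ ∑ v ∈ B.heavySet δ i, B.acceptProbFrom i (n - i) v := by
        rw [← nsmul_eq_mul]
        exact Finset.card_nsmul_le_sum _ _ _ fun v hv => (Finset.mem_filter.1 hv).2.le
    _ ≤ ∑ v, B.acceptProbFrom i (n - i) v :=
        Finset.sum_le_univ_sum_of_nonneg fun v => acceptFrac_nonneg _
    _ = B.accept.card := hB.sum_acceptProbFrom (by omega)

end HeavySet

section HitSet

theorem IsPerm.card_hitSet_le {B : OBP n w} (hB : B.IsPerm) (H : Finset (Fin n → Bool)) {i : ℕ}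
    (hi : i ≤ n) : (B.hitSet H i).card ≤ H.card * B.accept.card := by
  have hunion : B.hitSet H i = H.biUnion fun y =>
      Finset.univ.filter fun v => B.walk i v ((List.ofFn y).drop i) ∈ B.accept := by
    ext v
    simp [hitSet]
  rw [hunion]
  refine Finset.card_biUnion_le_card_mul _ _ _ fun y _ => ?_
  exact Finset.card_le_card_of_injOn (fun v => B.walk i v ((List.ofFn y).drop i))
    (fun v hv => by simpa using hv)
    (hB.walk_injective (by rw [List.length_drop, List.length_ofFn]; omega)).injOn

theorem hitSet_last_subset (B : OBP n w) (H : Finset (Fin n → Bool)) :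
    B.hitSet H n ⊆ B.accept := by
  intro v
  simp +contextual [hitSet, List.drop_of_length_le, walk]

theorem IsPerm.acceptProbFrom_le_of_notMem_hitSet {B : OBP n w} (hB : B.IsPerm)
    {H : Finset (Fin n → Bool)} {δ : ℝ} (hH : IsHitter (permClassA n B.accept.card) H δ)
    {i k : ℕ} (hik : i + k = n) {v : Fin w} (hv : v ∉ B.hitSet H i) :
    B.acceptProbFrom i k v ≤ δ := by
  by_contra! hlt
  rw [← B.acceptFrac_eval_restart hik] at hlt
  obtain ⟨y, hy, hyv⟩ := hH _ ⟨w, _, hB.restart i v, le_rfl, rfl⟩ hlt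
  rw [eval_restart, decide_eq_true_eq] at hyv
  exact hv (Finset.mem_filter.2 ⟨Finset.mem_univ _, y, hy, hyv⟩)

end HitSet

end OBP

section BlackBox

variable {n : ℕ}

/-- The input agreeing with `x` on the first `i` bits and with `y` afterwards. -/
def splice (x y : Fin n → Bool) (i : ℕ) (j : Fin n) : Bool :=
  if (j : ℕ) < i then x j else y j

theorem ofFn_splice (x y : Fin n → Bool) {i : ℕ} (hi : i ≤ n) :
    List.ofFn (splice x y i) = (List.ofFn x).take i ++ (List.ofFn y).drop i := by
  refine List.ext_getElem (by simp [hi]) fun j _ _ => ?_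
  rw [List.getElem_append]
  by_cases hj : j < i
  · simp [splice, hj, hi]
  · have hsub : i + (j - i) = j := by omega
    simp [splice, hj, hi, hsub]

/-- The queries to `f` needed to evaluate `spliceHitFun H f` on `Q`. -/
def splices (Q H : Finset (Fin n → Bool)) : Finset (Fin n → Bool) :=
  (Q ×ˢ H ×ˢ Finset.range (n + 1)).image fun t => splice t.1 t.2.1 t.2.2

theorem card_splices_le (Q H : Finset (Fin n → Bool)) :
    (splices Q H).card ≤ Q.card * (H.card * (n + 1)) :=
  Finset.card_image_le.trans (by simp [Finset.card_product])

/-- The induced hit function written in terms of black-box access to `f`: the `i`-th prefix of `x`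
leads into the hit set of layer `i` iff `f` accepts its continuation by a suffix of some `y ∈ H`. -/
def spliceHitFun (H : Finset (Fin n → Bool)) (f : (Fin n → Bool) → Bool) (x : Fin n → Bool) :
    Bool :=
  decide (∀ i ≤ n, ∃ y ∈ H, f (splice x y i) = true)

theorem spliceHitFun_congr {Q H : Finset (Fin n → Bool)} {f f' : (Fin n → Bool) → Bool}
    (h : ∀ x ∈ splices Q H, f x = f' x) {x : Fin n → Bool} (hx : x ∈ Q) :
    spliceHitFun H f x = spliceHitFun H f' x := by
  refine decide_eq_decide.2 <| forall₂_congr fun i hi => exists_congr fun y =>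
    and_congr_right fun hy => ?_
  rw [h _ (Finset.mem_image.2 ⟨(x, y, i), by simp [hx, hy, Nat.lt_succ_of_le hi], rfl⟩)]

theorem spliceHitFun_eval {w : ℕ} (B : OBP n w) (H : Finset (Fin n → Bool)) :
    spliceHitFun H B.eval = B.hitFun H := by
  funext x
  refine decide_eq_decide.2 <| forall₂_congr fun i hi => ?_
  simp [OBP.eval, OBP.hitSet, ofFn_splice _ _ hi, OBP.walk_append, hi]

end BlackBox

section Reduction

variable {n a M : ℕ} {H Q : Finset (Fin n → Bool)} {g : ((Fin n → Bool) → Bool) → ℝ} {δ ε : ℝ}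

theorem permClassA_mono (n : ℕ) : Monotone (permClassA n) := by
  rintro a b hab f ⟨w, B, hB, ha, rfl⟩
  exact ⟨w, B, hB, ha.trans hab, rfl⟩

theorem exists_le_mem_permClassW (hδ : 0 < δ) (hM : 0 < M) (haM : a / δ ≤ M)
    {f : (Fin n → Bool) → Bool} (hf : f ∈ permClassA n a) :
    ∃ f' ∈ permClassW n ((n + 1) * M), f' ≤ f ∧ acceptFrac f ≤ δ + acceptFrac f' := by
  obtain ⟨w, B, hB, ha, rfl⟩ := hf
  have hcard (i : ℕ) (hi : i ≤ n) : (B.heavySet δ i).card ≤ M := by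
    have : ((B.heavySet δ i).card : ℝ) ≤ M :=
      calc ((B.heavySet δ i).card : ℝ) ≤ B.accept.card / δ :=
            (le_div_iff₀ hδ).2 (hB.card_heavySet_mul_le δ hi)
        _ ≤ a / δ := by gcongr
        _ ≤ M := haM
    exact_mod_cast this
  exact ⟨B.stayFun (B.heavySet δ), hB.stayFun_mem_permClassW hM hcard,
    OBP.stayFun_le_eval (B.heavySet_last_subset hδ.le),
    B.acceptFrac_eval_le_add hδ.le fun _ _ hik _ => OBP.acceptProbFrom_le_of_notMem_heavySet hik⟩

theorem IsSampler.isHitter_permClassA (hδ : 0 < δ) (hM : 0 < M) (haM : a / δ ≤ M)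
    (hQ : IsSampler (permClassW n ((n + 1) * M)) Q g ε) :
    IsHitter (permClassA n a) Q (2 * ε + δ) :=
  (hQ.isHitter (OBP.false_mem_permClassW n (Nat.mul_pos n.succ_pos hM))).of_exists_le
    fun _ hf => exists_le_mem_permClassW hδ hM haM hf

theorem IsHitter.isSampler_permClassA (hδ : 0 ≤ δ) (hM : 0 < M) (hHM : H.card * a ≤ M)
    (hH : IsHitter (permClassA n a) H δ) (hQ : IsSampler (permClassW n ((n + 1) * M)) Q g ε) :
    IsSampler (permClassA n a) (splices Q H) (fun f => g (spliceHitFun H f)) (ε + δ) := by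
  refine ⟨fun f f' hff' => hQ.1 _ _ fun x hx => spliceHitFun_congr hff' hx, ?_⟩
  rintro _ ⟨w, B, hB, ha, rfl⟩
  change |g (spliceHitFun H B.eval) - acceptFrac B.eval| ≤ ε + δ
  rw [spliceHitFun_eval, OBP.hitFun_eq_stayFun]
  have hmem : B.stayFun (B.hitSet H) ∈ permClassW n ((n + 1) * M) :=
    hB.stayFun_mem_permClassW hM fun i hi =>
      (hB.card_hitSet_le H hi).trans ((Nat.mul_le_mul_left _ ha).trans hHM)
  have hestimate := abs_le.1 (hQ.2 _ hmem)
  have hlower : acceptFrac (B.stayFun (B.hitSet H)) ≤ acceptFrac B.eval :=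
    acceptFrac_mono (OBP.stayFun_le_eval (B.hitSet_last_subset H))
  have hupper : acceptFrac B.eval ≤ δ + acceptFrac (B.stayFun (B.hitSet H)) :=
    B.acceptFrac_eval_le_add hδ fun _ _ hik _ hv =>
      hB.acceptProbFrom_le_of_notMem_hitSet (fun f hf => hH f (permClassA_mono n ha hf)) hik hv
  exact abs_le.2 ⟨by linarith [hestimate.1], by linarith [hestimate.2]⟩

end Reduction

section QueryComplexity

/-- Permutation branching programs of length `n` and each bounded width `w` have samplers with
`(n * w / ε) ^ C` queries. -/
def HasPermSamplers (n : ℕ) (C : ℝ) : Prop :=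
  ∀ w : ℕ, 1 ≤ w → ∀ ε : ℝ, 0 < ε → ε < 1 →
    ∃ (Q : Finset (Fin n → Bool)) (g : ((Fin n → Bool) → Bool) → ℝ),
      IsSampler (permClassW n w) Q g ε ∧ (Q.card : ℝ) ≤ ((n * w : ℝ) / ε) ^ C

theorem add_one_le_div_of_le_half {x ε : ℝ} (hx : 1 ≤ x) (hε : 0 < ε) (hε' : ε ≤ 1 / 2) :
    x + 1 ≤ x / ε := by
  rw [le_div_iff₀ hε]
  nlinarith

variable {n a : ℕ} {C ε : ℝ}

theorem HasPermSamplers.exists_isHitter_permClassA (h : HasPermSamplers n C) (hC : 0 ≤ C)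
    (hn : 1 ≤ n) (ha : 1 ≤ a) (hε : 0 < ε) (hε' : ε ≤ 1 / 2) :
    ∃ H : Finset (Fin n → Bool), IsHitter (permClassA n a) H (ε / 2) ∧
      (H.card : ℝ) ≤ ((n * a : ℝ) / ε) ^ (9 * C) := by
  have hn' : (1 : ℝ) ≤ n := by exact_mod_cast hn
  have ha' : (1 : ℝ) ≤ a := by exact_mod_cast ha
  set X : ℝ := (n * a : ℝ) / ε with hX
  have hnX : n / ε ≤ X := by rw [hX]; gcongr; exact le_mul_of_one_le_right (by positivity) ha'
  have haX : a / ε ≤ X := by rw [hX]; gcongr; exact le_mul_of_one_le_left (by positivity) hn'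
  have hn1X : n + 1 ≤ X := (add_one_le_div_of_le_half hn' hε hε').trans hnX
  have h2X : 2 ≤ X := by linarith
  have h8X : 8 ≤ X ^ 3 := by
    calc (8 : ℝ) = 2 ^ 3 := by norm_num
      _ ≤ X ^ 3 := by gcongr
  have haε : (1 : ℝ) ≤ a / ε := by linarith [add_one_le_div_of_le_half ha' hε hε']
  have hquarter : (a : ℝ) / (ε / 4) = 4 * (a / ε) := by ring
  set M : ℕ := ⌈(a : ℝ) / (ε / 4)⌉₊
  have hM0 : 0 < M := Nat.ceil_pos.2 (by positivity)
  have hMX : (M : ℝ) ≤ X ^ 3 * X :=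
    calc (M : ℝ) ≤ 2 * (a / (ε / 4)) := Nat.ceil_le_two_mul (by rw [hquarter]; linarith)
      _ = 8 * (a / ε) := by rw [hquarter]; ring
      _ ≤ X ^ 3 * X := by gcongr
  obtain ⟨H, g, hH, hHcard⟩ := h ((n + 1) * M) (Nat.mul_pos n.succ_pos hM0) (ε / 8)
    (by positivity) (by linarith)
  refine ⟨H, ?_, ?_⟩
  · convert hH.isHitter_permClassA (by positivity) hM0 (Nat.le_ceil _) using 1
    ring
  · rw [Real.rpow_mul (by positivity)]
    refine hHcard.trans (Real.rpow_le_rpow (by positivity) ?_ hC)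
    calc (n * ((n + 1) * M : ℕ) : ℝ) / (ε / 8) = n / ε * 8 * ((n + 1) * M) := by
          push_cast
          field_simp
      _ ≤ X * X ^ 3 * (X * (X ^ 3 * X)) := by gcongr
      _ = X ^ (9 : ℝ) := by norm_cast; ring

theorem HasPermSamplers.exists_isSampler_permClassA (h : HasPermSamplers n C) (hC : 0 ≤ C)
    (hn : 1 ≤ n) (ha : 1 ≤ a) (hε : 0 < ε) (hε' : ε ≤ 1 / 2) {H : Finset (Fin n → Bool)}
    (hH : IsHitter (permClassA n a) H (ε / 2)) {D : ℝ} (hD : 0 ≤ D)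
    (hHcard : (H.card : ℝ) ≤ ((n * a : ℝ) / ε) ^ D) :
    ∃ (Q : Finset (Fin n → Bool)) (g : ((Fin n → Bool) → Bool) → ℝ),
      IsSampler (permClassA n a) Q g ε ∧
        (Q.card : ℝ) ≤ ((n * a : ℝ) / ε) ^ ((D + 4) * C + D + 1) := by
  have hn' : (1 : ℝ) ≤ n := by exact_mod_cast hn
  have ha' : (1 : ℝ) ≤ a := by exact_mod_cast ha
  set X : ℝ := (n * a : ℝ) / ε with hX
  have hnX : n / ε ≤ X := by rw [hX]; gcongr; exact le_mul_of_one_le_right (by positivity) ha'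
  have haX : a / ε ≤ X := by rw [hX]; gcongr; exact le_mul_of_one_le_left (by positivity) hn'
  have hn1X : n + 1 ≤ X := (add_one_le_div_of_le_half hn' hε hε').trans hnX
  have ha1X : a + 1 ≤ X := (add_one_le_div_of_le_half ha' hε hε').trans haX
  have h2X : 2 ≤ X := by linarith
  have hX0 : 0 < X := by linarith
  have hMX : ((H.card * a + 1 : ℕ) : ℝ) ≤ X ^ D * X := by
    have hXD : 1 ≤ X ^ D := Real.one_le_rpow (by linarith) hD
    push_cast
    calc (H.card * a + 1 : ℝ) ≤ X ^ D * a + X ^ D := by gcongr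
      _ = X ^ D * (a + 1) := by ring
      _ ≤ X ^ D * X := by gcongr
  obtain ⟨Q, g, hQ, hQcard⟩ := h ((n + 1) * (H.card * a + 1))
    (Nat.mul_pos n.succ_pos (Nat.succ_pos _)) (ε / 2) (by positivity) (by linarith)
  have hQX : (Q.card : ℝ) ≤ X ^ ((D + 4) * C) := by
    rw [Real.rpow_mul hX0.le]
    refine hQcard.trans (Real.rpow_le_rpow (by positivity) ?_ hC)
    calc (n * ((n + 1) * (H.card * a + 1) : ℕ) : ℝ) / (ε / 2)
        = n / ε * 2 * ((n + 1) * (H.card * a + 1 : ℕ)) := by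
          push_cast
          field_simp
      _ ≤ X * X * (X * (X ^ D * X)) := by gcongr
      _ = X ^ D * X ^ 4 := by ring
      _ = X ^ (D + 4) := by rw [Real.rpow_add hX0]; norm_cast
  refine ⟨splices Q H, fun f => g (spliceHitFun H f), ?_, ?_⟩
  · convert hH.isSampler_permClassA (by positivity) (Nat.succ_pos _) (Nat.le_succ _) hQ using 1
    ring
  · calc ((splices Q H).card : ℝ) ≤ Q.card * (H.card * (n + 1)) := by
          exact_mod_cast card_splices_le Q H
      _ ≤ X ^ ((D + 4) * C) * (X ^ D * X) := by gcongr
      _ = X ^ ((D + 4) * C + D + 1) := by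
        rw [Real.rpow_add hX0, Real.rpow_add hX0, Real.rpow_one, mul_assoc]

end QueryComplexity

/-- Optimal deterministic nonadaptive samplers for bounded-width permutation branching
programs yield optimal deterministic nonadaptive samplers for unbounded-width permutation
branching programs with at most `a` accept states. -/
theorem stmt1 (C : ℝ) (hC : 0 < C)
    (hyp : ∀ n w : ℕ, 1 ≤ n → 1 ≤ w → ∀ ε : ℝ, 0 < ε → ε < 1 →
      ∃ (Q : Finset (Fin n → Bool)) (g : ((Fin n → Bool) → Bool) → ℝ),
        IsSampler (permClassW n w) Q g ε ∧ (Q.card : ℝ) ≤ ((n * w : ℝ) / ε) ^ C) :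
    ∃ C' : ℝ, 0 < C' ∧ ∀ n a : ℕ, 1 ≤ n → 1 ≤ a → ∀ ε : ℝ, 0 < ε → ε < 1 →
      ∃ (Q' : Finset (Fin n → Bool)) (g' : ((Fin n → Bool) → Bool) → ℝ),
        IsSampler (permClassA n a) Q' g' ε ∧ (Q'.card : ℝ) ≤ ((n * a : ℝ) / ε) ^ C' := by
  refine ⟨(9 * C + 4) * C + 9 * C + 1, by positivity, fun n a hn ha ε hε _ => ?_⟩
  rcases le_total (1 / 2) ε with hhalf | hhalf
  · exact ⟨∅, fun _ => 1 / 2, isSampler_const_half _ hhalf,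
      by rw [Finset.card_empty, Nat.cast_zero]; positivity⟩
  have hsamplers : HasPermSamplers n C := fun w => hyp n w hn
  obtain ⟨H, hH, hHcard⟩ := hsamplers.exists_isHitter_permClassA hC.le hn ha hε hhalf
  exact hsamplers.exists_isSampler_permClassA hC.le hn ha hε hhalf hH (by positivity) hHcard
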